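/- Let 0<r≤1 and let (x_n, x_n*)_{n=1}^∞ be a biorthogonal system in an r-Banach space 𝕏. Suppose that a sequence (y_n)_{n=1}^∞ in 𝕏 satisfies Σ_{n=1}^∞ ‖x_n − y_n‖^r ‖x_n*‖^r < 1. Then (x_n) and (y_n) are congruent: there is a bounded linear isomorphism S of 𝕏 onto itself such that S(x_n)=y_n for all n∈ℕ. -/

import Mathlib

noncomputable section

open Classical
open scoped ENNReal NNReal

namespace AGpaper

/-! ### Convergence and completeness with respect to a gauge -/

/-- Convergence of a sequence with respect to a gauge (quasi-norm) `q`. -/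
def QTendsto {X : Type*} [AddCommGroup X] (q : X → ℝ) (u : ℕ → X) (x : X) : Prop :=
  ∀ ε : ℝ, 0 < ε → ∃ n₀ : ℕ, ∀ n, n₀ ≤ n → q (u n - x) < ε

/-- Cauchy condition with respect to a gauge `q`. -/
def QCauchy {X : Type*} [AddCommGroup X] (q : X → ℝ) (u : ℕ → X) : Prop :=
  ∀ ε : ℝ, 0 < ε → ∃ n₀ : ℕ, ∀ m, n₀ ≤ m → ∀ n, n₀ ≤ n → q (u m - u n) < ε

/-- A quasi-Banach space structure on a real vector space `X`. -/
structure QuasiBanach (X : Type*) [AddCommGroup X] [Module ℝ X] where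
  q : X → ℝ
  kappa : ℝ
  one_le_kappa : 1 ≤ kappa
  q_nonneg : ∀ x, 0 ≤ q x
  q_eq_zero_iff : ∀ x, q x = 0 ↔ x = 0
  q_smul : ∀ (a : ℝ) (x : X), q (a • x) = |a| * q x
  q_triangle : ∀ x y, q (x + y) ≤ kappa * (q x + q y)
  complete : ∀ u : ℕ → X, QCauchy q u → ∃ x, QTendsto q u x

/-- `X` is `p`-convex (0<p≤1): after renorming the quasi-norm is a `p`-norm. -/
def QuasiBanach.PConvex {X : Type*} [AddCommGroup X] [Module ℝ X]
    (B : QuasiBanach X) (p : ℝ) : Prop :=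
  ∃ q' : X → ℝ, (∀ x, 0 ≤ q' x) ∧ (∀ (a : ℝ) (x : X), q' (a • x) = |a| * q' x) ∧
    (∀ x y, q' (x + y) ^ p ≤ q' x ^ p + q' y ^ p) ∧
    ∃ c C : ℝ, 0 < c ∧ ∀ x, c * B.q x ≤ q' x ∧ q' x ≤ C * B.q x

/-! ### Biorthogonal systems and Schauder bases -/

variable {X : Type*} [AddCommGroup X] [Module ℝ X]

/-- A biorthogonal system in a space of vectors `X` which is equipped with a
membership predicate `mem` (the carrier of the space) and a gauge `nrm`:
the coordinate functionals are linear and bounded on the carrier. -/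
structure BioSystem (mem : X → Prop) (nrm : X → ℝ) where
  vec : ℕ → X
  vec_mem : ∀ n, mem (vec n)
  coord : ℕ → X → ℝ
  coord_add : ∀ (n : ℕ) (f g : X), mem f → mem g → coord n (f + g) = coord n f + coord n g
  coord_smul : ∀ (n : ℕ) (a : ℝ) (f : X), mem f → coord n (a • f) = a * coord n f
  coord_bdd : ∀ n : ℕ, ∃ C : ℝ, ∀ f, mem f → |coord n f| ≤ C * nrm f
  biorth : ∀ m n, coord m (vec n) = if m = n then (1 : ℝ) else 0

/-- A Schauder basis: a biorthogonal system whose expansions converge. -/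
structure SchauderB (mem : X → Prop) (nrm : X → ℝ) extends BioSystem mem nrm where
  expansion : ∀ f, mem f →
    QTendsto nrm (fun m => ∑ n ∈ Finset.range m, coord n f • vec n) f

/-- A Schauder basis of a quasi-Banach space. -/
abbrev QBasis {X : Type*} [AddCommGroup X] [Module ℝ X] (B : QuasiBanach X) :=
  SchauderB (fun _ : X => True) B.q

variable {mem : X → Prop} {nrm : X → ℝ}

/-- Coordinate projection on a finite set `A`. -/
def BioSystem.proj (b : BioSystem mem nrm) (A : Finset ℕ) (f : X) : X :=
  ∑ n ∈ A, b.coord n f • b.vec n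

def BioSystem.SemiNormalized (b : BioSystem mem nrm) : Prop :=
  ∃ c C : ℝ, 0 < c ∧ ∀ n, c ≤ nrm (b.vec n) ∧ nrm (b.vec n) ≤ C

/-- `A` is a greedy set of `f`. -/
def BioSystem.GreedySet (b : BioSystem mem nrm) (f : X) (A : Finset ℕ) : Prop :=
  ∀ j ∈ A, ∀ k, k ∉ A → |b.coord k f| ≤ |b.coord j f|

def BioSystem.QuasiGreedy (b : BioSystem mem nrm) : Prop :=
  ∃ C : ℝ, ∀ f, mem f → ∀ A : Finset ℕ, b.GreedySet f A → nrm (b.proj A f) ≤ C * nrm f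

def BioSystem.Democratic (b : BioSystem mem nrm) : Prop :=
  ∃ C : ℝ, ∀ A B : Finset ℕ, A.card ≤ B.card →
    nrm (∑ n ∈ A, b.vec n) ≤ C * nrm (∑ n ∈ B, b.vec n)

def BioSystem.AlmostGreedy (b : BioSystem mem nrm) : Prop :=
  b.QuasiGreedy ∧ b.Democratic

/-- Asymptotic suppression unconditionality: coordinate projections `S_A` with
`|A| < min A` are uniformly bounded. -/
def BioSystem.ASU (b : BioSystem mem nrm) : Prop :=
  ∃ D : ℝ, ∀ A : Finset ℕ, (∀ n ∈ A, A.card < n) →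
    ∀ f, mem f → nrm (b.proj A f) ≤ D * nrm f

/-- The fundamental function (upper super-democracy function). -/
def BioSystem.fundFun (b : BioSystem mem nrm) (m : ℕ) : ℝ :=
  sSup {t : ℝ | ∃ (A : Finset ℕ) (ε : ℕ → ℝ), A.card ≤ m ∧ (∀ n ∈ A, |ε n| = 1) ∧
    t = nrm (∑ n ∈ A, ε n • b.vec n)}

/-- The unconditionality parameters `k_m`. -/
def BioSystem.kparam (b : BioSystem mem nrm) (m : ℕ) : ℝ :=
  sSup {t : ℝ | ∃ (A : Finset ℕ) (f : X), A.card ≤ m ∧ mem f ∧ nrm f ≤ 1 ∧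
    t = nrm (b.proj A f)}

/-- The unconditionality parameters `k̃_m` (restricted to the span of the first
`m` basis vectors). -/
def BioSystem.ktilde (b : BioSystem mem nrm) (m : ℕ) : ℝ :=
  sSup {t : ℝ | ∃ (A : Finset ℕ) (a : ℕ → ℝ),
    nrm (∑ n ∈ Finset.range m, a n • b.vec n) ≤ 1 ∧
    t = nrm (b.proj A (∑ n ∈ Finset.range m, a n • b.vec n))}

/-! ### Symmetric and subsymmetric sequence spaces -/

/-- The indicator of `{0, 1, ..., m-1}`. -/
def indic (m : ℕ) : ℕ → ℝ := fun j => if j < m then 1 else 0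

/-- The `n`-th unit vector. -/
def unitVec (n : ℕ) : ℕ → ℝ := fun j => if j = n then 1 else 0

/-- The spreading `Σ_n ε_n f_n e_{φ(n)}` of a sequence `f`. -/
def spread (φ : ℕ → ℕ) (ε : ℕ → ℝ) (f : ℕ → ℝ) : ℕ → ℝ :=
  fun j => if h : ∃ n, φ n = j then ε h.choose * f h.choose else 0

/-- A symmetric sequence space: a quasi-Banach sequence space whose quasi-norm is
invariant under permutations and signs. -/
structure SymmetricSpace where
  mem : (ℕ → ℝ) → Prop
  nrm : (ℕ → ℝ) → ℝ
  kappa : ℝ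
  one_le_kappa : 1 ≤ kappa
  zero_mem : mem 0
  add_mem : ∀ {f g}, mem f → mem g → mem (f + g)
  smul_mem : ∀ (a : ℝ) {f}, mem f → mem (a • f)
  nrm_nonneg : ∀ f, 0 ≤ nrm f
  nrm_eq_zero : ∀ {f}, mem f → (nrm f = 0 ↔ f = 0)
  nrm_smul : ∀ (a : ℝ) (f : ℕ → ℝ), nrm (a • f) = |a| * nrm f
  nrm_triangle : ∀ {f g}, mem f → mem g → nrm (f + g) ≤ kappa * (nrm f + nrm g)
  complete : ∀ u : ℕ → (ℕ → ℝ), (∀ n, mem (u n)) → QCauchy nrm u →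
    ∃ f, mem f ∧ QTendsto nrm u f
  symmetric : ∀ {f}, mem f → ∀ (ε : ℕ → ℝ), (∀ n, |ε n| = 1) → ∀ π : Equiv.Perm ℕ,
    mem (fun j => ε j * f (π j)) ∧ nrm (fun j => ε j * f (π j)) = nrm f

/-- Fundamental function of a symmetric sequence space. -/
def SymmetricSpace.Lam (S : SymmetricSpace) (m : ℕ) : ℝ := S.nrm (indic m)

/-- A (locally convex, i.e. Banach) subsymmetric sequence space. -/
structure SubsymmetricSpace where
  mem : (ℕ → ℝ) → Prop
  nrm : (ℕ → ℝ) → ℝ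
  zero_mem : mem 0
  add_mem : ∀ {f g}, mem f → mem g → mem (f + g)
  smul_mem : ∀ (a : ℝ) {f}, mem f → mem (a • f)
  nrm_nonneg : ∀ f, 0 ≤ nrm f
  nrm_eq_zero : ∀ {f}, mem f → (nrm f = 0 ↔ f = 0)
  nrm_smul : ∀ (a : ℝ) (f : ℕ → ℝ), nrm (a • f) = |a| * nrm f
  nrm_triangle : ∀ {f g}, mem f → mem g → nrm (f + g) ≤ nrm f + nrm g
  complete : ∀ u : ℕ → (ℕ → ℝ), (∀ n, mem (u n)) → QCauchy nrm u →
    ∃ f, mem f ∧ QTendsto nrm u f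
  unit_mem : ∀ n, mem (unitVec n)
  unit_basis : ∀ f, mem f →
    QTendsto nrm (fun m => fun j => if j < m then f j else 0) f
  subsym : ∀ {f}, mem f → ∀ (ε : ℕ → ℝ), (∀ n, |ε n| = 1) → ∀ φ : ℕ → ℕ, StrictMono φ →
    mem (spread φ ε f) ∧ nrm (spread φ ε f) = nrm f

/-- Fundamental function of (the unit vector system of) a subsymmetric sequence space. -/
def SubsymmetricSpace.Lam (S : SubsymmetricSpace) (m : ℕ) : ℝ := S.nrm (indic m)

/-- The dual fundamental function `Λ*_m = m / Λ_m`. -/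
def SubsymmetricSpace.LamStar (S : SubsymmetricSpace) (m : ℕ) : ℝ := (m : ℝ) / S.Lam m

/-- Lower regularity property of a sequence of positive reals (indexed by `m ≥ 1`). -/
def LRP (Γ : ℕ → ℝ) : Prop := ∃ b : ℕ, 0 < b ∧ ∀ m : ℕ, 1 ≤ m → 2 * Γ m ≤ Γ (b * m)

/-- Upper regularity property. -/
def URP (Γ : ℕ → ℝ) : Prop := ∃ b : ℕ, 0 < b ∧ ∀ m : ℕ, 1 ≤ m → 2 * Γ (b * m) ≤ (b : ℝ) * Γ m

/-- Superreflexivity of a subsymmetric sequence space: it admits an equivalent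
uniformly convex norm. -/
def SubsymmetricSpace.Superreflexive (S : SubsymmetricSpace) : Prop :=
  ∃ nrm' : (ℕ → ℝ) → ℝ,
    (∀ f, S.mem f → 0 ≤ nrm' f) ∧
    (∀ (a : ℝ) (f), S.mem f → nrm' (a • f) = |a| * nrm' f) ∧
    (∀ f g, S.mem f → S.mem g → nrm' (f + g) ≤ nrm' f + nrm' g) ∧
    (∃ c C : ℝ, 0 < c ∧ ∀ f, S.mem f → c * S.nrm f ≤ nrm' f ∧ nrm' f ≤ C * S.nrm f) ∧
    (∀ ε : ℝ, 0 < ε → ∃ δ : ℝ, 0 < δ ∧ ∀ f g, S.mem f → S.mem g →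
      nrm' f ≤ 1 → nrm' g ≤ 1 → ε ≤ nrm' (f - g) → nrm' (f + g) ≤ 2 * (1 - δ))

/-! ### Upper and lower estimates -/

/-- A finite family with pairwise disjoint supports. -/
def DisjFam {ι : Type*} (F : ι → (ℕ → ℝ)) (J : Finset ι) : Prop :=
  ∀ i ∈ J, ∀ j ∈ J, i ≠ j → ∀ k, F i k = 0 ∨ F j k = 0

/-- `(Σ_{i∈J} |g i|^q)^{1/q}`, interpreted as `max_{i∈J} |g i|` when `q = ∞`. -/
def estNorm (q : ℝ≥0∞) {ι : Type*} (J : Finset ι) (g : ι → ℝ) : ℝ :=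
  if q = ⊤ then ((J.sup fun i => Real.toNNReal |g i| : NNReal) : ℝ)
  else (∑ i ∈ J, |g i| ^ q.toReal) ^ (1 / q.toReal)

/-- Upper `s`-estimate for a subsymmetric space (`s` finite). -/
def SubsymmetricSpace.UpperEst (S : SubsymmetricSpace) (s : ℝ) : Prop :=
  ∃ C : ℝ, ∀ (J : Finset ℕ) (F : ℕ → (ℕ → ℝ)), (∀ i ∈ J, S.mem (F i)) → DisjFam F J →
    S.nrm (∑ i ∈ J, F i) ≤ C * (∑ i ∈ J, S.nrm (F i) ^ s) ^ (1 / s)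

/-- Lower `q`-estimate for a subsymmetric space (`q` finite). -/
def SubsymmetricSpace.LowerEst (S : SubsymmetricSpace) (q : ℝ) : Prop :=
  ∃ C : ℝ, ∀ (J : Finset ℕ) (F : ℕ → (ℕ → ℝ)), (∀ i ∈ J, S.mem (F i)) → DisjFam F J →
    (∑ i ∈ J, S.nrm (F i) ^ q) ^ (1 / q) ≤ C * S.nrm (∑ i ∈ J, F i)

/-- Lower `q`-estimate, `q ∈ (0, ∞]`. -/
def SubsymmetricSpace.LowerEstE (S : SubsymmetricSpace) (q : ℝ≥0∞) : Prop :=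
  ∃ C : ℝ, ∀ (J : Finset ℕ) (F : ℕ → (ℕ → ℝ)), (∀ i ∈ J, S.mem (F i)) → DisjFam F J →
    estNorm q J (fun i => S.nrm (F i)) ≤ C * S.nrm (∑ i ∈ J, F i)

/-! ### Squeeze-symmetry -/

/-- The system is squeezed between the symmetric spaces `S₁` and `S₂`: the series
transform is bounded from `S₁` (on finitely supported vectors) and the coefficient
transform is bounded into `S₂`. -/
def BioSystem.SqueezedBetween (b : BioSystem mem nrm) (S₁ S₂ : SymmetricSpace) : Prop :=
  (∃ C : ℝ, ∀ a : ℕ →₀ ℝ, S₁.mem ⇑a →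
    nrm (∑ n ∈ a.support, a n • b.vec n) ≤ C * S₁.nrm ⇑a) ∧
  (∃ C : ℝ, ∀ f, mem f → S₂.mem (fun n => b.coord n f) ∧
    S₂.nrm (fun n => b.coord n f) ≤ C * nrm f)

/-- Squeeze-symmetric system: squeezed between two symmetric spaces with
equivalent fundamental functions. -/
def BioSystem.SqueezeSymmetric (b : BioSystem mem nrm) : Prop :=
  ∃ S₁ S₂ : SymmetricSpace, b.SqueezedBetween S₁ S₂ ∧
    ∃ c C : ℝ, 0 < c ∧ ∀ m : ℕ, 1 ≤ m →
      c * S₂.Lam m ≤ S₁.Lam m ∧ S₁.Lam m ≤ C * S₂.Lam m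

/-! ### Ordered partitions and the Dilworth–Kalton–Kutzarova construction -/

/-- An ordered partition of `ℕ` into (finite, nonempty) integer intervals. -/
structure OrderedPartition where
  part : ℕ → Finset ℕ
  nonempty : ∀ n, (part n).Nonempty
  ordered : ∀ n, ∀ i ∈ part n, ∀ j ∈ part (n + 1), i < j
  covers : ∀ k : ℕ, ∃ n, k ∈ part n

def OrderedPartition.N (σ : OrderedPartition) (n : ℕ) : ℕ := (σ.part n).card

def OrderedPartition.M (σ : OrderedPartition) (r : ℕ) : ℕ := ∑ n ∈ Finset.range r, σ.N n

/-- The averaging projection `P_σ`. -/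
def OrderedPartition.Pavg (σ : OrderedPartition) (f : ℕ → ℝ) : ℕ → ℝ := fun j =>
  if h : ∃ n, j ∈ σ.part n then
    (∑ i ∈ σ.part h.choose, f i) / ((σ.part h.choose).card : ℝ)
  else 0

/-- The complementary projection `Q_σ = Id - P_σ`. -/
def OrderedPartition.Qavg (σ : OrderedPartition) (f : ℕ → ℝ) : ℕ → ℝ := f - σ.Pavg f

/-- The functionals `v_n* = (Λ*_{N_n})⁻¹ Σ_{j∈σ_n} e_j*`. -/
def vstar (S : SubsymmetricSpace) (σ : OrderedPartition) (n : ℕ) (f : ℕ → ℝ) : ℝ :=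
  (S.Lam (σ.N n) / (σ.N n : ℝ)) * ∑ j ∈ σ.part n, f j

/-- The map `H(f) = Σ_n v_n*(f) x_n`. -/
def Hmap {X : Type*} [AddCommGroup X] [Module ℝ X] (B : QuasiBanach X) (b : QBasis B)
    (S : SubsymmetricSpace) (σ : OrderedPartition) (f : ℕ → ℝ) : X :=
  ∑ᶠ n, vstar S σ n f • b.vec n

/-- The quasi-norm `‖f‖ = ‖Q_σ f‖_S + ‖H f‖_X` on finitely supported sequences,
whose completion is the space `𝕐[𝒳,𝕊,σ]`. -/
def YNorm {X : Type*} [AddCommGroup X] [Module ℝ X] (B : QuasiBanach X) (b : QBasis B)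
    (S : SubsymmetricSpace) (σ : OrderedPartition) (f : ℕ → ℝ) : ℝ :=
  S.nrm (σ.Qavg f) + B.q (Hmap B b S σ f)

/-! ### Concrete sequence spaces -/

/-- Membership in `ℓ_p`, `0 < p < ∞`. -/
def lpMem (p : ℝ) (f : ℕ → ℝ) : Prop := Summable fun n => |f n| ^ p

/-- The `ℓ_p` quasi-norm, `0 < p < ∞`. -/
def lpNrm (p : ℝ) (f : ℕ → ℝ) : ℝ := (∑' n, |f n| ^ p) ^ (1 / p)

/-- Membership in `ℓ_p` for extended `p` (where `ℓ_∞` means `c₀`). -/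
def lpMemE (p : ℝ≥0∞) (f : ℕ → ℝ) : Prop :=
  if p = ⊤ then Filter.Tendsto f Filter.atTop (nhds 0) else lpMem p.toReal f

/-- The `ℓ_p` quasi-norm for extended `p`. -/
def lpNrmE (p : ℝ≥0∞) (f : ℕ → ℝ) : ℝ :=
  if p = ⊤ then ⨆ n, |f n| else lpNrm p.toReal f

/-- Membership in the matrix space `Z_{p,q} = ℓ_q(ℓ_p)` (with `ℓ_∞` meaning `c₀`). -/
def ZMem (p q : ℝ≥0∞) (f : ℕ → ℕ → ℝ) : Prop :=
  (∀ n, lpMemE p (f n)) ∧ lpMemE q (fun n => lpNrmE p (f n))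

/-- The quasi-norm of `Z_{p,q} = ℓ_q(ℓ_p)`. -/
def ZNrm (p q : ℝ≥0∞) (f : ℕ → ℕ → ℝ) : ℝ := lpNrmE q (fun n => lpNrmE p (f n))


theorem perturb_aux {X : Type*} [NormedAddCommGroup X] [CompleteSpace X] [Module ℝ X]
    [ContinuousConstSMul ℝ X] (c : ℕ → X →ₗ[ℝ] ℝ) (d : ℕ → X) (a : ℕ → ℝ)
    (ha0 : ∀ n, 0 ≤ a n)
    (ha : Summable a) (h1 : ∑' n, a n < 1) (hb : ∀ n f, ‖c n f • d n‖ ≤ a n * ‖f‖) :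
    ∃ T : X →ₗ[ℝ] X, (∀ f, T f = ∑' n, c n f • d n) ∧ (∀ f, ‖T f‖ ≤ (∑' n, a n) * ‖f‖) ∧
      ∀ g, ∃ f, f - T f = g := by
  have hs : ∀ f, Summable fun n => c n f • d n := fun f =>
    Summable.of_norm_bounded (ha.mul_right ‖f‖) (fun n => hb n f)
  let T : X →ₗ[ℝ] X :=
    { toFun := fun f => ∑' n, c n f • d n
      map_add' := by
        intro f g
        rw [← (hs f).tsum_add (hs g)]
        simp [add_smul]
      map_smul' := by
        intro t f
        simp only [RingHom.id_apply]
        rw [← (hs f).tsum_const_smul t]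
        simp [mul_smul] }
  have hT : ∀ f, ‖T f‖ ≤ (∑' n, a n) * ‖f‖ := fun f =>
    tsum_of_norm_bounded (ha.hasSum.mul_right ‖f‖) (fun n => hb n f)
  have hθ : 0 ≤ ∑' n, a n := tsum_nonneg ha0
  refine ⟨T, fun f => rfl, hT, fun g => ?_⟩
  have hc : ContractingWith ⟨∑' n, a n, hθ⟩ (fun f => g + T f) := by
    refine ⟨by exact_mod_cast h1, LipschitzWith.of_dist_le_mul fun f f' => ?_⟩
    rw [dist_add_left, dist_eq_norm, dist_eq_norm, ← map_sub]
    exact hT _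
  have := hc.fixedPoint_isFixedPt
  refine ⟨hc.fixedPoint, ?_⟩
  rw [sub_eq_iff_eq_add]
  exact this.symm

theorem statement19 {X : Type*} [AddCommGroup X] [Module ℝ X]
    (r : ℝ) (hr0 : 0 < r) (hr1 : r ≤ 1)
    (q : X → ℝ)
    (hq_pos : ∀ x : X, x ≠ 0 → 0 < q x) (hq_zero : q 0 = 0)
    (hq_smul : ∀ (a : ℝ) (x : X), q (a • x) = |a| * q x)
    (hq_tri : ∀ x y : X, q (x + y) ^ r ≤ q x ^ r + q y ^ r)
    (hq_complete : ∀ u : ℕ → X, QCauchy q u → ∃ x, QTendsto q u x)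
    (x : ℕ → X) (xs : ℕ → X →ₗ[ℝ] ℝ)
    (hxs_bdd : ∀ n, ∃ C : ℝ, ∀ f : X, |xs n f| ≤ C * q f)
    (hbiorth : ∀ m n, xs m (x n) = if m = n then (1 : ℝ) else 0)
    (y : ℕ → X)
    (hsummable : Summable fun n =>
      q (x n - y n) ^ r * (sSup {t : ℝ | ∃ f : X, q f ≤ 1 ∧ t = |xs n f|}) ^ r)
    (hsmall : (∑' n : ℕ,
      q (x n - y n) ^ r * (sSup {t : ℝ | ∃ f : X, q f ≤ 1 ∧ t = |xs n f|}) ^ r) < 1) :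
    ∃ S : X →ₗ[ℝ] X, Function.Bijective S ∧
      (∃ C : ℝ, ∀ f : X, q (S f) ≤ C * q f) ∧
      (∃ c : ℝ, 0 < c ∧ ∀ f : X, c * q f ≤ q (S f)) ∧
      ∀ n, S (x n) = y n := by
  have hq0 : ∀ f, 0 ≤ q f := fun f => by
    by_cases h : f = 0
    · rw [h, hq_zero]
    · exact (hq_pos f h).le
  set M : ℕ → ℝ := fun n => sSup {t : ℝ | ∃ f : X, q f ≤ 1 ∧ t = |xs n f|} with hM
  have hMn : ∀ n, 0 ≤ M n := by
    intro n
    apply Real.sSup_nonneg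
    rintro t ⟨f, -, rfl⟩
    exact abs_nonneg _
  have hMb : ∀ n f, |xs n f| ≤ M n * q f := by
    intro n f
    by_cases h : f = 0
    · simp [h, hq_zero]
    have hp := hq_pos f h
    obtain ⟨C, hC⟩ := hxs_bdd n
    have hbdd : BddAbove {t : ℝ | ∃ f : X, q f ≤ 1 ∧ t = |xs n f|} := by
      refine ⟨|C|, ?_⟩
      rintro t ⟨f, hf, rfl⟩
      calc |xs n f| ≤ C * q f := hC f
        _ ≤ |C| * q f := mul_le_mul_of_nonneg_right (le_abs_self C) (hq0 f)
        _ ≤ |C| * 1 := mul_le_mul_of_nonneg_left hf (abs_nonneg C)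
        _ = |C| := mul_one _
    have h2 : |xs n ((q f)⁻¹ • f)| ≤ M n := by
      refine le_csSup hbdd ⟨_, ?_, rfl⟩
      rw [hq_smul, abs_of_pos (inv_pos.2 hp), inv_mul_cancel₀ hp.ne']
    rw [map_smul, smul_eq_mul, abs_mul, abs_of_pos (inv_pos.2 hp), inv_mul_eq_div,
      div_le_iff₀ hp] at h2
    exact h2
  let gn : AddGroupNorm X :=
    { toFun := fun f => q f ^ r
      map_zero' := by rw [hq_zero, Real.zero_rpow hr0.ne']
      add_le' := hq_tri
      neg' := fun f => by
        have := hq_smul (-1) f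
        simp only [neg_smul, one_smul, abs_neg, abs_one, one_mul] at this
        simp only [this]
      eq_zero_of_map_eq_zero' := fun f hf => by
        by_contra h
        exact (Real.rpow_pos_of_pos (hq_pos f h) r).ne' hf }
  letI : NormedAddCommGroup X := gn.toNormedAddCommGroup
  have hnorm : ∀ f : X, ‖f‖ = q f ^ r := fun f => rfl
  have hsm : ∀ (t : ℝ) (f : X), ‖t • f‖ = |t| ^ r * ‖f‖ := fun t f => by
    rw [hnorm, hnorm, hq_smul, Real.mul_rpow (abs_nonneg _) (hq0 f)]
  have hlt : ∀ (f : X) (ε : ℝ), 0 < ε → (‖f‖ < ε ^ r ↔ q f < ε) := fun f ε hε => by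
    rw [hnorm, Real.rpow_lt_rpow_iff (hq0 f) hε.le hr0]
  have hroot : ∀ ε : ℝ, 0 < ε → (ε ^ (r⁻¹)) ^ r = ε := fun ε hε =>
    Real.rpow_inv_rpow hε.le hr0.ne'
  haveI : CompleteSpace X := by
    apply Metric.complete_of_cauchySeq_tendsto
    intro u hu
    rw [Metric.cauchySeq_iff] at hu
    obtain ⟨z, hz⟩ := hq_complete u (by
      intro ε hε
      obtain ⟨N, hN⟩ := hu (ε ^ r) (Real.rpow_pos_of_pos hε r)
      refine ⟨N, fun m hm n hn => ?_⟩
      have := hN m hm n hn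
      rw [dist_eq_norm] at this
      exact (hlt _ _ hε).1 this)
    refine ⟨z, Metric.tendsto_atTop.2 fun ε hε => ?_⟩
    have hε' := Real.rpow_pos_of_pos hε r⁻¹
    obtain ⟨N, hN⟩ := hz _ hε'
    refine ⟨N, fun n hn => ?_⟩
    rw [dist_eq_norm, ← hroot ε hε]
    exact (hlt _ _ hε').2 (hN n hn)
  haveI : ContinuousConstSMul ℝ X := by
    refine ⟨fun t => ?_⟩
    have : LipschitzWith ⟨|t| ^ r, Real.rpow_nonneg (abs_nonneg t) r⟩ (fun f : X => t • f) := by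
      refine LipschitzWith.of_dist_le_mul fun f g => ?_
      rw [dist_eq_norm, dist_eq_norm, ← smul_sub, hsm]
      exact le_rfl
    exact this.continuous
  obtain ⟨T, hTd, hTb, hTs⟩ := perturb_aux xs (fun n => x n - y n)
    (fun n => q (x n - y n) ^ r * (M n) ^ r)
    (fun n => mul_nonneg (Real.rpow_nonneg (hq0 _) r) (Real.rpow_nonneg (hMn n) r))
    hsummable hsmall (by
      intro n f
      rw [hsm, hnorm, hnorm]
      have h3 : |xs n f| ^ r ≤ M n ^ r * q f ^ r := by
        rw [← Real.mul_rpow (hMn n) (hq0 f)]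
        exact Real.rpow_le_rpow (abs_nonneg _) (hMb n f) hr0.le
      calc |xs n f| ^ r * q (x n - y n) ^ r
          ≤ (M n ^ r * q f ^ r) * q (x n - y n) ^ r :=
            mul_le_mul_of_nonneg_right h3 (Real.rpow_nonneg (hq0 _) r)
        _ = _ := by ring)
  set θ := ∑' n, q (x n - y n) ^ r * (M n) ^ r with hθ
  have hθ0 : 0 ≤ θ :=
    tsum_nonneg fun n => mul_nonneg (Real.rpow_nonneg (hq0 _) r) (Real.rpow_nonneg (hMn n) r)
  have hup : ∀ f, ‖f - T f‖ ≤ (1 + θ) * ‖f‖ := fun f => by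
    have := norm_sub_le f (T f)
    linarith [hTb f]
  have hlow : ∀ f, (1 - θ) * ‖f‖ ≤ ‖f - T f‖ := fun f => by
    have := norm_sub_norm_le f (T f)
    linarith [hTb f]
  have h1θ : 0 < 1 - θ := sub_pos.2 hsmall
  refine ⟨LinearMap.id - T, ⟨?_, ?_⟩, ⟨(1 + θ) ^ r⁻¹, ?_⟩, ⟨(1 - θ) ^ r⁻¹, ?_, ?_⟩, ?_⟩
  · rw [injective_iff_map_eq_zero]
    intro f hf
    have h := hlow f
    have hf' : f - T f = 0 := hf
    rw [hf', norm_zero] at h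
    have : ‖f‖ ≤ 0 := by
      by_contra hc
      exact absurd h (not_le.2 (mul_pos h1θ (not_le.1 hc)))
    exact norm_le_zero_iff.1 this
  · intro g
    exact hTs g
  · intro f
    have hp : 0 ≤ (1 + θ) ^ r⁻¹ := Real.rpow_nonneg (by linarith) _
    rw [← Real.rpow_le_rpow_iff (hq0 _) (mul_nonneg hp (hq0 f)) hr0,
      Real.mul_rpow hp (hq0 f), hroot _ (by linarith)]
    exact hup f
  · exact Real.rpow_pos_of_pos h1θ _
  · intro f
    have hp : 0 ≤ (1 - θ) ^ r⁻¹ := Real.rpow_nonneg h1θ.le _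
    rw [← Real.rpow_le_rpow_iff (mul_nonneg hp (hq0 f)) (hq0 _) hr0,
      Real.mul_rpow hp (hq0 f), hroot _ h1θ]
    exact hlow f
  · intro n
    have : T (x n) = x n - y n := by
      rw [hTd, tsum_eq_single n]
      · simp [hbiorth]
      · intro m hm
        simp [hbiorth, hm]
    change x n - T (x n) = y n
    rw [this]
    abel


end AGpaper
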